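/- Let f, g : ℝ → ℝ be 1-periodic functions of bounded variation on [0,1], let G(x) = ∫₀¹ f(u) f(u+x) du and G_H(x) = ∫₀¹ f_H(u) f_H(u+x) du, where f_H is the Fejér (Cesàro) mean of f of order H. Then V(G − G_H) ≤ 2 V(f) ‖f − f_H‖_{L¹([0,1])}, and consequently V(G − G_H) → 0 as H → ∞. -/

import Mathlib

open MeasureTheory Filter

/-- Minkowski-type bound for the variation of a parametric integral. -/
lemma var_integral_le (k : ℝ → ℝ) (φ : ℝ → ℝ → ℝ) (C : ℝ) (s : Set ℝ)
    (hk : IntervalIntegrable k volume 0 1)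
    (hφ : ∀ x, IntervalIntegrable (fun u => k u * φ u x) volume 0 1)
    (hC : 0 ≤ C)
    (hV : ∀ u, eVariationOn (φ u) s ≤ ENNReal.ofReal C) :
    eVariationOn (fun x => ∫ u in (0:ℝ)..1, k u * φ u x) s ≤
      ENNReal.ofReal (C * ∫ u in (0:ℝ)..1, |k u|) := by
  refine iSup_le ?_
  rintro ⟨n, p, hp, hps⟩
  simp only [edist_dist]
  rw [← ENNReal.ofReal_sum_of_nonneg (fun _ _ => dist_nonneg)]
  apply ENNReal.ofReal_le_ofReal
  have hint : ∀ i, IntervalIntegrable (fun u => |k u * φ u (p (i+1)) - k u * φ u (p i)|) volume 0 1 :=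
    fun i => ((hφ _).sub (hφ _)).abs
  calc ∑ i ∈ Finset.range n, dist (∫ u in (0:ℝ)..1, k u * φ u (p (i+1))) (∫ u in (0:ℝ)..1, k u * φ u (p i))
      ≤ ∑ i ∈ Finset.range n, ∫ u in (0:ℝ)..1, |k u * φ u (p (i+1)) - k u * φ u (p i)| := by
        apply Finset.sum_le_sum
        intro i _
        rw [Real.dist_eq, ← intervalIntegral.integral_sub (hφ _) (hφ _)]
        exact intervalIntegral.abs_integral_le_integral_abs zero_le_one
    _ = ∫ u in (0:ℝ)..1, ∑ i ∈ Finset.range n, |k u * φ u (p (i+1)) - k u * φ u (p i)| := by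
        rw [intervalIntegral.integral_finsetSum]
        intro i _
        exact hint i
    _ ≤ ∫ u in (0:ℝ)..1, C * |k u| := by
        apply intervalIntegral.integral_mono_on zero_le_one
        · have := IntervalIntegrable.sum (Finset.range n) (fun i _ => hint i)
          refine this.congr ?_
          intro x _
          simp
        · exact hk.abs.const_mul C
        · intro u _
          have h1 : ∑ i ∈ Finset.range n, dist (φ u (p (i+1))) (φ u (p i)) ≤ C := by
            have := (eVariationOn.sum_le (f := φ u) (n := n) hp hps).trans (hV u)
            simp only [edist_dist] at this
            rw [← ENNReal.ofReal_sum_of_nonneg (fun _ _ => dist_nonneg)] at this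
            exact (ENNReal.ofReal_le_ofReal_iff hC).1 this
          calc _ = |k u| * ∑ i ∈ Finset.range n, dist (φ u (p (i+1))) (φ u (p i)) := by
                rw [Finset.mul_sum]
                refine Finset.sum_congr rfl fun i _ => ?_
                rw [Real.dist_eq, ← abs_mul, mul_sub]
            _ ≤ |k u| * C := mul_le_mul_of_nonneg_left h1 (abs_nonneg _)
            _ = _ := mul_comm _ _
    _ = _ := by rw [intervalIntegral.integral_const_mul]

lemma var_add_le (f g : ℝ → ℝ) (s : Set ℝ) :
    eVariationOn (fun x => f x + g x) s ≤ eVariationOn f s + eVariationOn g s := by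
  refine iSup_le ?_
  rintro ⟨n, p, hp, hps⟩
  refine le_trans ?_ (add_le_add (eVariationOn.sum_le (f := f) (n := n) hp hps)
    (eVariationOn.sum_le (f := g) (n := n) hp hps))
  rw [← Finset.sum_add_distrib]
  exact Finset.sum_le_sum fun i _ => edist_add_add_le _ _ _ _

lemma var_shift (f : ℝ → ℝ) (t a b : ℝ) :
    eVariationOn (fun x => f (t + x)) (Set.Icc a b) = eVariationOn f (Set.Icc (t + a) (t + b)) := by
  have := eVariationOn.comp_eq_of_monotoneOn f (t := Set.Icc a b) (fun x => t + x)
    (fun x _ y _ h => by simpa using h)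
  rw [Set.image_const_add_Icc] at this
  exact this

lemma var_reflect (f : ℝ → ℝ) (t a b : ℝ) :
    eVariationOn (fun x => f (t - x)) (Set.Icc a b) = eVariationOn f (Set.Icc (t - b) (t - a)) := by
  have := eVariationOn.comp_eq_of_antitoneOn f (t := Set.Icc a b) (fun x => t - x)
    (fun x _ y _ h => sub_le_sub_left h t)
  rw [Set.image_const_sub_Icc] at this
  exact this

lemma var_int (f : ℝ → ℝ) (hf : Function.Periodic f 1) (n : ℤ) (a b : ℝ) :
    eVariationOn f (Set.Icc (n + a) (n + b)) = eVariationOn f (Set.Icc a b) := by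
  rw [← var_shift]
  congr 1
  ext x
  rw [add_comm]
  simpa using hf.int_mul n x

lemma var_split (f : ℝ → ℝ) {a b c : ℝ} (hab : a ≤ b) (hbc : b ≤ c) :
    eVariationOn f (Set.Icc a b) + eVariationOn f (Set.Icc b c) = eVariationOn f (Set.Icc a c) := by
  simpa using eVariationOn.Icc_add_Icc f (s := Set.univ) hab hbc (Set.mem_univ _)

lemma var_period (f : ℝ → ℝ) (hf : Function.Periodic f 1) (a : ℝ) :
    eVariationOn f (Set.Icc a (a + 1)) = eVariationOn f (Set.Icc 0 1) := by
  have h0 := Int.fract_nonneg a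
  have h1 := (Int.fract_lt_one a).le
  have e : eVariationOn f (Set.Icc a (a + 1)) =
      eVariationOn f (Set.Icc (Int.fract a) (Int.fract a + 1)) := by
    rw [← var_int f hf ⌊a⌋ (Int.fract a), ← add_assoc, Int.floor_add_fract]
  rw [e, ← var_split f h1 (by linarith : (1:ℝ) ≤ Int.fract a + 1), ← var_split f h0 h1, add_comm]
  congr 1
  have := var_int f hf 1 0 (Int.fract a)
  rw [← this]
  simp [add_comm]

lemma bdd_of_bv (f : ℝ → ℝ) (hf : Function.Periodic f 1)
    (hfBV : BoundedVariationOn f (Set.Icc 0 1)) : ∃ M, 0 ≤ M ∧ ∀ x, |f x| ≤ M := by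
  refine ⟨|f 0| + (eVariationOn f (Set.Icc 0 1)).toReal, by positivity, fun x => ?_⟩
  have h : f x = f (Int.fract x) := by
    have := hf.int_mul ⌊x⌋ (Int.fract x)
    rw [← this]; simp
  rw [h]
  have := hfBV.dist_le (x := Int.fract x) (y := 0)
    ⟨Int.fract_nonneg x, (Int.fract_lt_one x).le⟩ (by simp)
  rw [Real.dist_eq] at this
  have h2 := abs_sub_abs_le_abs_sub (f (Int.fract x)) (f 0)
  linarith

lemma translate_L1 (f : ℝ → ℝ) (hf : Function.Periodic f 1) (hfm : Measurable f)
    (hfBV : BoundedVariationOn f (Set.Icc 0 1)) (t : ℝ) (ht : 0 ≤ t) :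
    ∫ x in (0:ℝ)..1, |f (x + t) - f x| ≤ (eVariationOn f (Set.Icc 0 1)).toReal * t := by
  obtain ⟨M, hM0, hM⟩ := bdd_of_bv f hf hfBV
  have hloc : LocallyBoundedVariationOn f Set.univ := by
    intro a b _ _
    obtain ⟨n, hn⟩ := exists_nat_ge (b - a)
    have key : ∀ n : ℕ, eVariationOn f (Set.Icc a (a + n)) ≠ ⊤ := by
      intro n
      induction n with
      | zero => simp
      | succ n ih =>
        rw [← var_split f (by simp : a ≤ a + n) (by push_cast; linarith : a + n ≤ a + ((n+1 : ℕ):ℝ))]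
        refine ENNReal.add_ne_top.2 ⟨ih, ?_⟩
        rw [show a + ((n+1 : ℕ):ℝ) = a + n + 1 by push_cast; ring, var_period f hf]
        exact hfBV
    exact BoundedVariationOn.mono (key n) (fun x hx => ⟨hx.2.1, by linarith [hx.2.2]⟩)
  set v : ℝ → ℝ := variationOnFromTo f Set.univ 0 with hv
  have hmono : Monotone v := by
    have := variationOnFromTo.monotoneOn hloc (Set.mem_univ (0:ℝ))
    exact monotoneOn_univ.1 this
  have hdiff : ∀ x y, x ≤ y → v y - v x = (eVariationOn f (Set.Icc x y)).toReal := by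
    intro x y hxy
    have := variationOnFromTo.add hloc (Set.mem_univ (0:ℝ)) (Set.mem_univ x) (Set.mem_univ y)
    rw [variationOnFromTo.eq_of_le f Set.univ hxy, Set.univ_inter] at this
    simp only [hv]; linarith
  have hi : ∀ a b, IntervalIntegrable v volume a b := fun a b => hmono.intervalIntegrable
  have hi2 : ∀ c a b, IntervalIntegrable (fun x => v (x + c)) volume a b := fun c a b =>
    Monotone.intervalIntegrable (fun x y h => hmono (by linarith))
  have hle : ∀ x, |f (x + t) - f x| ≤ v (x + t) - v x := by
    intro x
    rw [hdiff x (x+t) (by linarith), ← Real.dist_eq]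
    exact BoundedVariationOn.dist_le
      (by simpa using hloc x (x+t) (Set.mem_univ _) (Set.mem_univ _))
      ⟨by linarith, le_rfl⟩ ⟨le_rfl, by linarith⟩
  calc _ ≤ ∫ x in (0:ℝ)..1, (v (x + t) - v x) := by
        apply intervalIntegral.integral_mono_on zero_le_one
        · apply IntervalIntegrable.mono_fun' (g := fun _ => 2 * M) (by simp)
          · exact ((hfm.comp (measurable_id.add_const t)).sub hfm).abs.aestronglyMeasurable
          · refine Eventually.of_forall fun x => ?_
            simp only [Real.norm_eq_abs, abs_abs]
            have := abs_sub (f (x+t)) (f x)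
            linarith [hM (x+t), hM x]
        · exact (hi2 t _ _).sub (hi _ _)
        · intro x _; exact hle x
    _ = ∫ x in (0:ℝ)..t, (v (x + 1) - v x) := by
        rw [intervalIntegral.integral_sub (hi2 t _ _) (hi _ _),
          intervalIntegral.integral_sub (hi2 1 _ _) (hi _ _),
          intervalIntegral.integral_comp_add_right, intervalIntegral.integral_comp_add_right]
        have h1 := intervalIntegral.integral_add_adjacent_intervals (hi 0 t) (hi t (1+t))
        have h2 := intervalIntegral.integral_add_adjacent_intervals (hi 0 1) (hi 1 (1+t))
        rw [zero_add, zero_add, add_comm t 1]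
        linarith
    _ = ∫ x in (0:ℝ)..t, (eVariationOn f (Set.Icc 0 1)).toReal := by
        congr 1
        ext x
        rw [hdiff x (x+1) (by linarith), var_period f hf]
    _ = _ := by simp [mul_comm]

lemma translate_L1' (f : ℝ → ℝ) (hf : Function.Periodic f 1) (hfm : Measurable f)
    (hfBV : BoundedVariationOn f (Set.Icc 0 1)) (y : ℝ) (h0 : 0 ≤ y) (h1 : y ≤ 1) :
    ∫ x in (0:ℝ)..1, |f (x - y) - f x| ≤
      (eVariationOn f (Set.Icc 0 1)).toReal * (Real.sin (Real.pi * y) / 2) := by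
  have hpi := Real.pi_pos
  rcases le_total y (1/2) with h | h
  · have e : ∫ x in (0:ℝ)..1, |f (x - y) - f x| = ∫ x in (0:ℝ)..1, |f (x + y) - f x| := by
      have hp : Function.Periodic (fun x => |f x - f (x + y)|) 1 := by
        intro x
        have h2 := hf (x + y)
        simp only
        rw [hf x, show x + 1 + y = x + y + 1 by ring, h2]
      have := hp.intervalIntegral_add_eq (-y) 0
      have h3 := intervalIntegral.integral_comp_sub_right (a := 0) (b := 1) (fun x => |f x - f (x + y)|) y
      simp only [sub_add_cancel] at h3
      rw [h3]
      rw [show (0:ℝ) - y = -y by ring, show 1 - y = -y + 1 by ring, this]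
      simp only [zero_add]
      congr 1; ext x; exact abs_sub_comm _ _
    rw [e]
    refine (translate_L1 f hf hfm hfBV y h0).trans
      (mul_le_mul_of_nonneg_left ?_ ENNReal.toReal_nonneg)
    have := Real.mul_le_sin (x := Real.pi * y) (by positivity) (by nlinarith)
    have h4 : 2 / Real.pi * (Real.pi * y) = 2 * y := by field_simp
    linarith
  · have e : ∀ x, f (x - y) = f (x + (1 - y)) := by
      intro x; rw [← hf (x - y)]; ring_nf
    simp only [e]
    refine (translate_L1 f hf hfm hfBV (1 - y) (by linarith)).trans
      (mul_le_mul_of_nonneg_left ?_ ENNReal.toReal_nonneg)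
    have := Real.mul_le_sin (x := Real.pi * (1 - y)) (mul_nonneg hpi.le (by linarith)) (by nlinarith)
    have h4 : 2 / Real.pi * (Real.pi * (1-y)) = 2 * (1-y) := by field_simp
    rw [show Real.pi * (1 - y) = Real.pi - Real.pi * y by ring, Real.sin_pi_sub] at this
    rw [show Real.pi * (1 - y) = Real.pi - Real.pi * y by ring] at h4
    linarith

lemma sum_Ioo_sym (a : ℤ → ℂ) (n : ℕ) :
    ∑ h ∈ Finset.Ioo (-((n+1 : ℕ):ℤ)) ((n+1 : ℕ):ℤ), a h =
      a 0 + ∑ k ∈ Finset.range n, (a (k+1) + a (-(k+1))) := by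
  induction n with
  | zero =>
    have : Finset.Ioo (-((0+1 : ℕ):ℤ)) ((0+1 : ℕ):ℤ) = {0} := by
      ext x; simp only [Finset.mem_Ioo, Finset.mem_singleton]; omega
    rw [this]; simp
  | succ n ih =>
    have : Finset.Ioo (-((n+1+1 : ℕ):ℤ)) ((n+1+1 : ℕ):ℤ) =
        insert ((n:ℤ)+1) (insert (-((n:ℤ)+1)) (Finset.Ioo (-((n+1 : ℕ):ℤ)) ((n+1 : ℕ):ℤ))) := by
      ext x; simp only [Finset.mem_Ioo, Finset.mem_insert]; omega
    rw [this, Finset.sum_insert, Finset.sum_insert, ih, Finset.sum_range_succ]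
    · ring
    · simp only [Finset.mem_Ioo]; omega
    · simp only [Finset.mem_insert, Finset.mem_Ioo]; omega

/-- real form of the Fejer kernel of order `n+1` -/
lemma fejer_real (F : ℝ → ℝ) (n : ℕ)
    (hF : ∀ x : ℝ, (F x : ℂ) =
      ∑ h ∈ Finset.Ioo (-((n+1 : ℕ):ℤ)) ((n+1 : ℕ):ℤ),
        (1 - |(h:ℝ)| / ((n+1 : ℕ) : ℝ)) * Complex.exp (2 * Real.pi * h * x * Complex.I)) (x : ℝ) :
    F x = 1 + ∑ k ∈ Finset.range n,
      (1 - ((k:ℝ)+1)/(n+1)) * (2 * Real.cos (2 * Real.pi * (k+1) * x)) := by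
  have h := hF x
  rw [sum_Ioo_sym (fun h : ℤ => ((1 - |(h:ℝ)| / ((n+1 : ℕ) : ℝ)) : ℂ) *
    Complex.exp (2 * Real.pi * h * x * Complex.I))] at h
  apply Complex.ofReal_injective
  rw [h]
  push_cast
  congr 1
  · simp
  · refine Finset.sum_congr rfl fun k _ => ?_
    have e1 : |((k:ℝ)+1)| = k+1 := abs_of_nonneg (by positivity)
    rw [abs_neg, e1, ← mul_add, Complex.two_cos]
    push_cast
    congr 2
    · congr 1; ring

lemma fejer_sq (θ : ℝ) (n : ℕ) :
    (n:ℝ) + 1 + ∑ k ∈ Finset.range n, ((n:ℝ) - k) * (2 * Real.cos ((k+1) * θ)) =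
      (∑ k ∈ Finset.range (n+1), Real.cos (k * θ))^2 +
      (∑ k ∈ Finset.range (n+1), Real.sin (k * θ))^2 := by
  induction n with
  | zero => simp
  | succ n ih =>
    rw [Finset.sum_range_succ _ (n+1), Finset.sum_range_succ _ (n+1)]
    set C := ∑ k ∈ Finset.range (n+1), Real.cos (k * θ)
    set S := ∑ k ∈ Finset.range (n+1), Real.sin (k * θ)
    have h1 : Real.cos (((n+1:ℕ):ℝ) * θ) * C + Real.sin (((n+1:ℕ):ℝ) * θ) * S =
        ∑ k ∈ Finset.range (n+1), Real.cos ((k+1) * θ) := by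
      rw [Finset.mul_sum, Finset.mul_sum, ← Finset.sum_add_distrib,
        ← Finset.sum_range_reflect]
      refine Finset.sum_congr rfl fun k hk => ?_
      have hk' : k ≤ n := Nat.lt_succ_iff.1 (Finset.mem_range.1 hk)
      rw [← Real.cos_sub]
      congr 1
      rw [show n + 1 - 1 - k = n - k by omega]
      push_cast [Nat.cast_sub hk']
      ring
    have h2 : ∑ k ∈ Finset.range (n+1), (((n+1:ℕ):ℝ) - k) * (2 * Real.cos ((k+1) * θ)) =
        ∑ k ∈ Finset.range n, ((n:ℝ) - k) * (2 * Real.cos ((k+1) * θ)) +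
        2 * ∑ k ∈ Finset.range (n+1), Real.cos ((k+1) * θ) := by
      have : ∑ k ∈ Finset.range n, ((n:ℝ) - k) * (2 * Real.cos ((k+1) * θ)) =
        ∑ k ∈ Finset.range (n+1), ((n:ℝ) - k) * (2 * Real.cos ((k+1) * θ)) := by
        rw [Finset.sum_range_succ]; simp
      rw [this, Finset.mul_sum, ← Finset.sum_add_distrib]
      refine Finset.sum_congr rfl fun k hk => ?_
      push_cast; ring
    have h3 := Real.cos_sq_add_sin_sq (((n+1:ℕ):ℝ) * θ)
    rw [h2]
    have hc : ((n+1:ℕ):ℝ) = n + 1 := by push_cast; ring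
    rw [hc] at h1 h3 ⊢
    linear_combination ih - 2 * h1 - h3

lemma fejer_nonneg (F : ℝ → ℝ) (n : ℕ)
    (hF : ∀ x, F x = 1 + ∑ k ∈ Finset.range n,
      (1 - ((k:ℝ)+1)/(n+1)) * (2 * Real.cos (2 * Real.pi * (k+1) * x))) (x : ℝ) : 0 ≤ F x := by
  have h := fejer_sq (2 * Real.pi * x) n
  have hn : (0:ℝ) < n + 1 := by positivity
  have e : (n + 1 : ℝ) * F x =
      (n:ℝ) + 1 + ∑ k ∈ Finset.range n, ((n:ℝ) - k) * (2 * Real.cos ((k+1) * (2 * Real.pi * x))) := by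
    rw [hF, mul_add, mul_one, Finset.mul_sum]
    congr 1
    refine Finset.sum_congr rfl fun k _ => ?_
    rw [show ((k:ℝ)+1) * (2 * Real.pi * x) = 2 * Real.pi * (k+1) * x by ring]
    field_simp
    ring
  have : 0 ≤ (n + 1 : ℝ) * F x := by rw [e, h]; positivity
  exact nonneg_of_mul_nonneg_right this hn

lemma int_cos (m : ℤ) (hm : m ≠ 0) : ∫ x in (0:ℝ)..1, Real.cos (2 * Real.pi * m * x) = 0 := by
  have hm' : (m:ℝ) ≠ 0 := by exact_mod_cast hm
  have hc : 2 * Real.pi * m ≠ 0 := by positivity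
  rw [intervalIntegral.integral_comp_mul_left (fun x => Real.cos x) hc, integral_cos]
  have := Real.sin_int_mul_pi (2 * m)
  push_cast at this
  simp only [mul_one, mul_zero, Real.sin_zero, sub_zero]
  rw [show 2 * Real.pi * m = 2 * m * Real.pi by ring, this]
  simp

lemma fejer_cont (F : ℝ → ℝ) (n : ℕ)
    (hF : ∀ x, F x = 1 + ∑ k ∈ Finset.range n,
      (1 - ((k:ℝ)+1)/(n+1)) * (2 * Real.cos (2 * Real.pi * (k+1) * x))) : Continuous F := by
  rw [show F = _ from funext hF]
  fun_prop

lemma fejer_int (F : ℝ → ℝ) (n : ℕ)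
    (hF : ∀ x, F x = 1 + ∑ k ∈ Finset.range n,
      (1 - ((k:ℝ)+1)/(n+1)) * (2 * Real.cos (2 * Real.pi * (k+1) * x))) :
    ∫ x in (0:ℝ)..1, F x = 1 := by
  simp only [hF]
  rw [intervalIntegral.integral_add (by simp) (by apply Continuous.intervalIntegrable; fun_prop),
    intervalIntegral.integral_finsetSum
      (fun i _ => by apply Continuous.intervalIntegrable; fun_prop)]
  rw [Finset.sum_eq_zero]
  · simp
  · intro k _
    rw [intervalIntegral.integral_const_mul, intervalIntegral.integral_const_mul]
    have := int_cos (k+1) (by omega)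
    push_cast at this
    rw [this]; simp

lemma fejer_int_cos (F : ℝ → ℝ) (n : ℕ)
    (hF : ∀ x, F x = 1 + ∑ k ∈ Finset.range n,
      (1 - ((k:ℝ)+1)/(n+1)) * (2 * Real.cos (2 * Real.pi * (k+1) * x))) :
    ∫ x in (0:ℝ)..1, F x * Real.cos (2 * Real.pi * x) = 1 - 1 / (n+1) := by
  have e : ∀ x, F x * Real.cos (2 * Real.pi * x) = Real.cos (2 * Real.pi * (1:ℤ) * x) +
      ∑ k ∈ Finset.range n, (1 - ((k:ℝ)+1)/(n+1)) *
        (Real.cos (2 * Real.pi * ((k+2 : ℤ):ℝ) * x) + Real.cos (2 * Real.pi * ((k:ℤ):ℝ) * x)) := by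
    intro x
    rw [hF, add_mul, Finset.sum_mul]
    congr 1
    · simp
    · refine Finset.sum_congr rfl fun k _ => ?_
      rw [mul_assoc]
      congr 1
      rw [show 2 * Real.pi * ((k+2 : ℤ):ℝ) * x = 2 * Real.pi * (k+1) * x + 2 * Real.pi * x by
          push_cast; ring,
        show 2 * Real.pi * ((k : ℤ):ℝ) * x = 2 * Real.pi * (k+1) * x - 2 * Real.pi * x by
          push_cast; ring, Real.cos_add, Real.cos_sub]
      ring
  simp only [e]
  rw [intervalIntegral.integral_add (by apply Continuous.intervalIntegrable; fun_prop)
      (by apply Continuous.intervalIntegrable; fun_prop),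
    intervalIntegral.integral_finsetSum
      (fun i _ => by apply Continuous.intervalIntegrable; fun_prop), int_cos 1 one_ne_zero, zero_add]
  have h : ∀ k ∈ Finset.range n, ∫ x in (0:ℝ)..1, (1 - ((k:ℝ)+1)/(n+1)) *
        (Real.cos (2 * Real.pi * ((k+2 : ℤ):ℝ) * x) + Real.cos (2 * Real.pi * ((k:ℤ):ℝ) * x)) =
        if k = 0 then 1 - 1 / ((n:ℝ)+1) else 0 := by
    intro k _
    rw [intervalIntegral.integral_const_mul,
      intervalIntegral.integral_add (by apply Continuous.intervalIntegrable; fun_prop)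
      (by apply Continuous.intervalIntegrable; fun_prop), int_cos (k+2) (by omega)]
    split_ifs with hk
    · subst hk; simp
    · rw [int_cos k (by exact_mod_cast hk)]; simp
  rw [Finset.sum_congr rfl h, Finset.sum_ite_eq']
  cases n <;> simp

lemma fejer_int_sin (F : ℝ → ℝ) (n : ℕ)
    (hF : ∀ x, F x = 1 + ∑ k ∈ Finset.range n,
      (1 - ((k:ℝ)+1)/(n+1)) * (2 * Real.cos (2 * Real.pi * (k+1) * x))) :
    ∫ x in (0:ℝ)..1, F x * Real.sin (Real.pi * x) ≤ 2 / Real.sqrt (n+1) := by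
  have hc := fejer_cont F n hF
  have hn : (0:ℝ) < n + 1 := by positivity
  set r := Real.sqrt (n+1) with hr
  have hr0 : 0 < r := Real.sqrt_pos.2 hn
  have hr2 : r * r = n + 1 := Real.mul_self_sqrt hn.le
  calc _ ≤ ∫ x in (0:ℝ)..1, ((1 / r + r / 8) * F x - r / 8 * (F x * Real.cos (2 * Real.pi * x))) := by
        apply intervalIntegral.integral_mono_on zero_le_one
        · apply Continuous.intervalIntegrable; fun_prop
        · apply Continuous.intervalIntegrable; fun_prop
        · intro x _
          have h1 : Real.cos (2 * Real.pi * x) = 1 - 2 * Real.sin (Real.pi * x)^2 := by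
            rw [mul_assoc, Real.cos_two_mul, Real.cos_sq']; ring
          rw [h1]
          have h2 : Real.sin (Real.pi * x) ≤ 1 / r + r / 4 * Real.sin (Real.pi * x)^2 := by
            set s := Real.sin (Real.pi * x)
            have : 1 / r + r / 4 * s^2 - s = (1 - r * s / 2)^2 / r := by field_simp; ring
            have : 0 ≤ (1 - r * s / 2)^2 / r := by positivity
            linarith
          have := mul_le_mul_of_nonneg_left h2 (fejer_nonneg F n hF x)
          linarith
    _ = (1 / r + r / 8) - r / 8 * (1 - 1 / (n+1)) := by
        rw [intervalIntegral.integral_sub (by apply Continuous.intervalIntegrable; fun_prop)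
          (by apply Continuous.intervalIntegrable; fun_prop), intervalIntegral.integral_const_mul,
          intervalIntegral.integral_const_mul, fejer_int F n hF, fejer_int_cos F n hF, mul_one]
    _ ≤ _ := by
        rw [← hr2]
        have : 1 / r + r / 8 - r / 8 * (1 - 1 / (r * r)) = 9/8 * (1 / r) := by field_simp; ring
        rw [this, show 2 / r = 2 * (1 / r) by ring]
        have : 0 < 1 / r := by positivity
        linarith

lemma ii_of_bdd (g : ℝ → ℝ) (hg : Measurable g) (M : ℝ) (hM : ∀ x, |g x| ≤ M) (a b : ℝ) :
    IntervalIntegrable g volume a b := by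
  apply IntervalIntegrable.mono_fun' (g := fun _ => M) (by simp)
  · exact hg.aestronglyMeasurable
  · exact Eventually.of_forall fun x => hM x

lemma fejer_bdd (F : ℝ → ℝ) (n : ℕ)
    (hF : ∀ x, F x = 1 + ∑ k ∈ Finset.range n,
      (1 - ((k:ℝ)+1)/(n+1)) * (2 * Real.cos (2 * Real.pi * (k+1) * x))) :
    ∃ B, 0 ≤ B ∧ ∀ x, |F x| ≤ B := by
  refine ⟨1 + ∑ k ∈ Finset.range n, |1 - ((k:ℝ)+1)/(n+1)| * 2, by positivity, fun x => ?_⟩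
  rw [hF]
  refine (abs_add_le _ _).trans (add_le_add (by simp) ?_)
  refine (Finset.abs_sum_le_sum_abs _ _).trans (Finset.sum_le_sum fun k _ => ?_)
  rw [abs_mul]
  refine mul_le_mul_of_nonneg_left ?_ (abs_nonneg _)
  rw [abs_mul, abs_two]
  linarith [Real.abs_cos_le_one (2 * Real.pi * (k+1) * x)]

lemma core (f : ℝ → ℝ) (hfp : Function.Periodic f 1) (hfm : Measurable f)
    (hfBV : BoundedVariationOn f (Set.Icc 0 1)) (F : ℝ → ℝ) (n : ℕ)
    (hF : ∀ x, F x = 1 + ∑ k ∈ Finset.range n,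
      (1 - ((k:ℝ)+1)/(n+1)) * (2 * Real.cos (2 * Real.pi * (k+1) * x)))
    (g : ℝ → ℝ) (hg : ∀ x, g x = ∫ y in (0:ℝ)..1, f (x - y) * F y) :
    Measurable g ∧ Function.Periodic g 1 ∧ (∃ M, ∀ x, |g x| ≤ M) ∧
    eVariationOn g (Set.Icc 0 1) ≤ eVariationOn f (Set.Icc 0 1) ∧
    ∫ x in (0:ℝ)..1, |f x - g x| ≤
      (eVariationOn f (Set.Icc 0 1)).toReal / Real.sqrt (n+1) := by
  obtain ⟨M, hM0, hM⟩ := bdd_of_bv f hfp hfBV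
  obtain ⟨B, hB0, hB⟩ := fejer_bdd F n hF
  have hFc := fejer_cont F n hF
  have hFm := hFc.measurable
  have hF0 := fejer_nonneg F n hF
  have hF1 := fejer_int F n hF
  have hFi : IntervalIntegrable F volume 0 1 := hFc.intervalIntegrable _ _
  have hfFm : ∀ x, Measurable (fun y => f (x - y) * F y) := fun x =>
    (hfm.comp (measurable_const.sub measurable_id)).mul hFm
  have hfFb : ∀ x y, |f (x - y) * F y| ≤ M * B := fun x y => by
    rw [abs_mul]; exact mul_le_mul (hM _) (hB _) (abs_nonneg _) hM0
  have hfFi : ∀ x, IntervalIntegrable (fun y => f (x - y) * F y) volume 0 1 := fun x =>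
    ii_of_bdd _ (hfFm x) (M * B) (hfFb x) _ _
  have hgm : Measurable g := by
    rw [show g = _ from funext hg]
    simp only [intervalIntegral.integral_of_le zero_le_one]
    have : StronglyMeasurable (fun p : ℝ × ℝ => f (p.1 - p.2) * F p.2) :=
      ((hfm.comp (measurable_fst.sub measurable_snd)).mul
        (hFm.comp measurable_snd)).stronglyMeasurable
    exact (this.integral_prod_right (ν := volume.restrict (Set.Ioc 0 1))).measurable
  have hgp : Function.Periodic g 1 := by
    intro x
    rw [hg, hg]
    congr 1; ext y
    rw [show x + 1 - y = x - y + 1 by ring, hfp]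
  have hgb : ∀ x, |g x| ≤ M * B := by
    intro x
    rw [hg]
    have := intervalIntegral.norm_integral_le_of_norm_le_const (a := 0) (b := 1) (C := M * B)
      (f := fun y => f (x - y) * F y) (fun y _ => hfFb x y)
    simpa using this
  refine ⟨hgm, hgp, ⟨_, hgb⟩, ?_, ?_⟩
  · have h := var_integral_le F (fun y x => f (x - y)) (eVariationOn f (Set.Icc 0 1)).toReal
      (Set.Icc 0 1) hFi (fun x => (hfFi x).congr (fun y _ => mul_comm _ _)) ENNReal.toReal_nonneg
      (fun y => by
        rw [ENNReal.ofReal_toReal hfBV]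
        have := var_shift f (-y) 0 1
        rw [add_zero, var_period f hfp] at this
        rw [← this]
        simp only [neg_add_eq_sub]
        exact le_rfl)
    have e : (fun x => ∫ y in (0:ℝ)..1, F y * f (x - y)) = g := by
      ext x; rw [hg]; congr 1; ext y; ring
    rw [e] at h
    simp only [abs_of_nonneg (hF0 _), hF1, mul_one] at h
    rwa [ENNReal.ofReal_toReal hfBV] at h
  · have hb2 : ∀ x y, |(F y * |(f (x - y) - f x)|)| ≤ B * (2 * M) := by
      intro x y
      rw [abs_mul, abs_abs]
      refine mul_le_mul (hB y) ?_ (abs_nonneg _) hB0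
      have := abs_sub (f (x - y)) (f x)
      linarith [hM (x - y), hM x]
    have hjm : Measurable (fun p : ℝ × ℝ => F p.2 * |f (p.1 - p.2) - f p.1|) :=
      (hFm.comp measurable_snd).mul
        ((hfm.comp (measurable_fst.sub measurable_snd)).sub (hfm.comp measurable_fst)).abs
    have hxi : ∀ x, IntervalIntegrable (fun y => F y * |f (x - y) - f x|) volume 0 1 := fun x =>
      ii_of_bdd _ (hjm.comp (measurable_const.prodMk measurable_id)) _ (hb2 x) _ _
    have hm1 : Measurable (fun x => ∫ y in (0:ℝ)..1, F y * |f (x - y) - f x|) := by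
      simp only [intervalIntegral.integral_of_le zero_le_one]
      exact (hjm.stronglyMeasurable.integral_prod_right
        (ν := volume.restrict (Set.Ioc 0 1))).measurable
    have hm2 : Measurable (fun y => ∫ x in (0:ℝ)..1, F y * |f (x - y) - f x|) := by
      simp only [intervalIntegral.integral_of_le zero_le_one]
      exact (hjm.stronglyMeasurable.integral_prod_left
        (μ := volume.restrict (Set.Ioc 0 1))).measurable
    calc ∫ x in (0:ℝ)..1, |f x - g x|
        ≤ ∫ x in (0:ℝ)..1, ∫ y in (0:ℝ)..1, F y * |f (x - y) - f x| := by
          apply intervalIntegral.integral_mono_on zero_le_one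
          · refine ii_of_bdd _ (hfm.sub hgm).abs (M + M * B) (fun x => ?_) _ _
            rw [abs_abs]
            exact (abs_sub _ _).trans (add_le_add (hM x) (hgb x))
          · refine ii_of_bdd _ hm1 (B * (2 * M)) (fun x => ?_) _ _
            have := intervalIntegral.norm_integral_le_of_norm_le_const (a := 0) (b := 1)
              (C := B * (2 * M)) (f := fun y => F y * |f (x - y) - f x|) (fun y _ => hb2 x y)
            simpa using this
          · intro x _
            have e : g x - f x = ∫ y in (0:ℝ)..1, F y * (f (x - y) - f x) := by
              have : f x = ∫ y in (0:ℝ)..1, f x * F y := by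
                rw [intervalIntegral.integral_const_mul, hF1, mul_one]
              rw [hg]
              nth_rewrite 1 [this]
              rw [← intervalIntegral.integral_sub (hfFi x) (hFi.const_mul _)]
              congr 1; ext y; ring
            rw [abs_sub_comm, e]
            refine (intervalIntegral.abs_integral_le_integral_abs zero_le_one).trans (le_of_eq ?_)
            congr 1; ext y
            rw [abs_mul, abs_of_nonneg (hF0 y)]
      _ = ∫ y in (0:ℝ)..1, ∫ x in (0:ℝ)..1, F y * |f (x - y) - f x| := by
          apply intervalIntegral_intervalIntegral_swap
          refine Measure.integrableOn_of_bounded (M := B * (2 * M)) ?_ ?_ ?_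
          · rw [Measure.volume_eq_prod, Measure.prod_prod]; simp
          · exact hjm.aestronglyMeasurable
          · exact Eventually.of_forall fun p => hb2 p.1 p.2
      _ ≤ ∫ y in (0:ℝ)..1, (eVariationOn f (Set.Icc 0 1)).toReal / 2 *
            (F y * Real.sin (Real.pi * y)) := by
          apply intervalIntegral.integral_mono_on zero_le_one
          · refine ii_of_bdd _ hm2 (B * (2 * M)) (fun y => ?_) _ _
            have := intervalIntegral.norm_integral_le_of_norm_le_const (a := 0) (b := 1)
              (C := B * (2 * M)) (f := fun x => F y * |f (x - y) - f x|) (fun x _ => hb2 x y)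
            simpa using this
          · apply Continuous.intervalIntegrable; fun_prop
          · intro y hy
            rw [intervalIntegral.integral_const_mul]
            have := mul_le_mul_of_nonneg_left (translate_L1' f hfp hfm hfBV y hy.1 hy.2) (hF0 y)
            linarith
      _ = (eVariationOn f (Set.Icc 0 1)).toReal / 2 *
            ∫ y in (0:ℝ)..1, (F y * Real.sin (Real.pi * y)) := by
          rw [intervalIntegral.integral_const_mul]
      _ ≤ (eVariationOn f (Set.Icc 0 1)).toReal / 2 * (2 / Real.sqrt (n+1)) := by
          refine mul_le_mul_of_nonneg_left (fejer_int_sin F n hF) ?_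
          have := ENNReal.toReal_nonneg (a := eVariationOn f (Set.Icc 0 1))
          positivity
      _ = _ := by ring

lemma var_diff (f g : ℝ → ℝ) (hfp : Function.Periodic f 1) (hfm : Measurable f)
    (hfBV : BoundedVariationOn f (Set.Icc 0 1))
    (hgm : Measurable g) (hgp : Function.Periodic g 1) (hgb : ∃ M, ∀ x, |g x| ≤ M)
    (hgv : eVariationOn g (Set.Icc 0 1) ≤ eVariationOn f (Set.Icc 0 1)) :
    eVariationOn (fun x => (∫ u in (0:ℝ)..1, f u * f (u + x)) - ∫ u in (0:ℝ)..1, g u * g (u + x))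
      (Set.Icc 0 1) ≤
    ENNReal.ofReal (2 * (eVariationOn f (Set.Icc 0 1)).toReal * ∫ x in (0:ℝ)..1, |f x - g x|) := by
  obtain ⟨M, hM0, hM⟩ := bdd_of_bv f hfp hfBV
  obtain ⟨N, hN⟩ := hgb
  have hii : ∀ p q : ℝ → ℝ, Measurable p → Measurable q → (∃ A, ∀ x, |p x| ≤ A) →
      (∃ A, ∀ x, |q x| ≤ A) → IntervalIntegrable (fun u => p u * q u) volume 0 1 := by
    rintro p q hp hq ⟨A, hA⟩ ⟨A', hA'⟩
    refine ii_of_bdd _ (hp.mul hq) (A * A') (fun x => ?_) _ _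
    rw [Pi.mul_apply, abs_mul]
    exact mul_le_mul (hA x) (hA' x) (abs_nonneg _) ((abs_nonneg _).trans (hA x))
  have hfs : ∀ x, Measurable (fun u => f (u + x)) := fun x => hfm.comp (measurable_id.add_const x)
  have hgs : ∀ x, Measurable (fun u => g (u + x)) := fun x => hgm.comp (measurable_id.add_const x)
  have hgs' : ∀ x, Measurable (fun u => g (u - x)) := fun x => hgm.comp (measurable_id.sub_const x)
  have hkm : Measurable (fun u => f u - g u) := hfm.sub hgm
  have hkb : ∀ x, |f x - g x| ≤ M + N := fun x => (abs_sub _ _).trans (add_le_add (hM x) (hN x))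
  have e : ∀ x, (∫ u in (0:ℝ)..1, f u * f (u + x)) - ∫ u in (0:ℝ)..1, g u * g (u + x) =
      ∫ u in (0:ℝ)..1, (f u - g u) * (f (u + x) + g (u - x)) := by
    intro x
    have h1 : ∫ u in (0:ℝ)..1, (f u - g u) * g (u - x) =
        ∫ u in (0:ℝ)..1, (f (u + x) - g (u + x)) * g u := by
      have hp : Function.Periodic (fun u => (f (u + x) - g (u + x)) * g u) 1 := by
        intro u
        simp only
        rw [show u + 1 + x = u + x + 1 by ring, hfp, hgp, hgp]
      have h2 := hp.intervalIntegral_add_eq (-x) 0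
      have h3 := intervalIntegral.integral_comp_sub_right (a := 0) (b := 1)
        (fun u => (f (u + x) - g (u + x)) * g u) x
      simp only [sub_add_cancel] at h3
      rw [h3, show (0:ℝ) - x = -x by ring, show 1 - x = -x + 1 by ring, h2, zero_add]
    have i1 := hii (fun u => f u - g u) (fun u => f (u + x)) hkm (hfs x) ⟨_, hkb⟩ ⟨M, fun u => hM _⟩
    have i2 := hii (fun u => f u - g u) (fun u => g (u - x)) hkm (hgs' x) ⟨_, hkb⟩ ⟨N, fun u => hN _⟩
    have i3 := hii (fun u => f (u + x) - g (u + x)) g ((hfs x).sub (hgs x)) hgm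
      ⟨_, fun u => hkb (u + x)⟩ ⟨N, hN⟩
    have i4 := hii f (fun u => f (u + x)) hfm (hfs x) ⟨_, hM⟩ ⟨M, fun u => hM _⟩
    have i5 := hii g (fun u => g (u + x)) hgm (hgs x) ⟨_, hN⟩ ⟨N, fun u => hN _⟩
    simp only [mul_add]
    rw [intervalIntegral.integral_add i1 i2, h1, ← intervalIntegral.integral_add i1 i3,
      ← intervalIntegral.integral_sub i4 i5]
    congr 1; ext u; ring
  simp only [e]
  refine var_integral_le (fun u => f u - g u) (fun u x => f (u + x) + g (u - x)) _ _
    (ii_of_bdd _ hkm _ hkb _ _) (fun x => ?_) (by positivity) (fun u => ?_)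
  · exact hii _ _ hkm ((hfs x).add (hgs' x)) ⟨_, hkb⟩
      ⟨M + N, fun u => (abs_add_le _ _).trans (add_le_add (hM _) (hN _))⟩
  · refine (var_add_le _ _ _).trans ?_
    rw [var_shift, var_reflect, add_zero, sub_zero, var_period f hfp]
    have := var_period g hgp (u - 1)
    rw [sub_add_cancel] at this
    rw [this, ENNReal.ofReal_mul (by norm_num), ENNReal.ofReal_toReal hfBV]
    rw [show ENNReal.ofReal 2 = 2 by simp, two_mul]
    exact add_le_add le_rfl hgv

/-- For `f` `1`-periodic of bounded variation on `[0,1]`, with Fejér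
means `f_H`, autocorrelations `G(x) = ∫₀¹ f(u)f(u+x)du` and
`G_H(x) = ∫₀¹ f_H(u)f_H(u+x)du`, one has `V(G − G_H) ≤ 2 V(f) ‖f − f_H‖_{L¹}`, and
consequently `V(G − G_H) → 0` as `H → ∞`. -/
theorem stmt11
    (f : ℝ → ℝ) (hfp : Function.Periodic f 1) (hfm : Measurable f)
    (hfBV : BoundedVariationOn f (Set.Icc 0 1))
    (FH : ℕ → ℝ → ℝ)
    (hFH : ∀ H : ℕ, 1 ≤ H → ∀ x : ℝ, (FH H x : ℂ) =
      ∑ h ∈ Finset.Ioo (-(H:ℤ)) (H:ℤ),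
        (1 - |(h:ℝ)| / H) * Complex.exp (2 * Real.pi * h * x * Complex.I))
    (fH : ℕ → ℝ → ℝ)
    (hfH : ∀ H : ℕ, 1 ≤ H → ∀ x, fH H x = ∫ y in (0:ℝ)..1, f (x - y) * FH H y)
    (G : ℝ → ℝ) (hG : ∀ x, G x = ∫ u in (0:ℝ)..1, f u * f (u + x))
    (GH : ℕ → ℝ → ℝ)
    (hGH : ∀ H : ℕ, 1 ≤ H → ∀ x, GH H x = ∫ u in (0:ℝ)..1, fH H u * fH H (u + x)) :
    (∀ H : ℕ, 1 ≤ H →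
      eVariationOn (fun x => G x - GH H x) (Set.Icc 0 1) ≤
        ENNReal.ofReal (2 * (eVariationOn f (Set.Icc 0 1)).toReal *
          ∫ x in (0:ℝ)..1, |f x - fH H x|)) ∧
    Tendsto (fun H : ℕ => (eVariationOn (fun x => G x - GH H x) (Set.Icc 0 1)).toReal)
      atTop (nhds 0) := by
  have h1 : ∀ H : ℕ, 1 ≤ H →
      eVariationOn (fun x => G x - GH H x) (Set.Icc 0 1) ≤
        ENNReal.ofReal (2 * (eVariationOn f (Set.Icc 0 1)).toReal *
          ∫ x in (0:ℝ)..1, |f x - fH H x|) ∧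
      ∫ x in (0:ℝ)..1, |f x - fH H x| ≤
        (eVariationOn f (Set.Icc 0 1)).toReal / Real.sqrt H := by
    intro H hH
    obtain ⟨n, rfl⟩ : ∃ n, H = n + 1 := ⟨H - 1, by omega⟩
    obtain ⟨c1, c2, c3, c4, c5⟩ := core f hfp hfm hfBV (FH (n+1)) n
      (fejer_real (FH (n+1)) n (hFH (n+1) hH)) (fH (n+1)) (hfH (n+1) hH)
    refine ⟨?_, by push_cast; exact c5⟩
    have := var_diff f (fH (n+1)) hfp hfm hfBV c1 c2 c3 c4
    simp only [hG, hGH (n+1) hH]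
    exact this
  refine ⟨fun H hH => (h1 H hH).1, ?_⟩
  set V := (eVariationOn f (Set.Icc 0 1)).toReal with hV
  have hV0 : 0 ≤ V := ENNReal.toReal_nonneg
  have hlim : Tendsto (fun H : ℕ => 2 * V * (V / Real.sqrt H)) atTop (nhds 0) := by
    have : Tendsto (fun H : ℕ => V / Real.sqrt H) atTop (nhds 0) :=
      (Real.tendsto_sqrt_atTop.comp tendsto_natCast_atTop_atTop).const_div_atTop V
    simpa using this.const_mul (2 * V)
  refine squeeze_zero' (Eventually.of_forall fun _ => ENNReal.toReal_nonneg) ?_ hlim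
  filter_upwards [eventually_ge_atTop 1] with H hH
  have h2 := (h1 H hH).2
  have h3 : 0 ≤ ∫ x in (0:ℝ)..1, |f x - fH H x| :=
    intervalIntegral.integral_nonneg zero_le_one fun _ _ => abs_nonneg _
  refine (ENNReal.toReal_le_of_le_ofReal (by positivity) (h1 H hH).1).trans ?_
  exact mul_le_mul_of_nonneg_left h2 (by positivity)
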